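/- Let ν ∈ ℂ \ {0, 2, 4, …}, and let x, x' ∈ ℝ² be given in polar coordinates by x = (r cos φ, r sin φ), x' = (r' cos φ', r' sin φ') with r, r' > 0 and r ≠ r'. Then ‖x − x'‖^ν = ( e^{iπ(ν+1)/2} / Γ(−ν/2) ) · ( (r_>² − r_<²)^{(ν+1)/2} / √(π r r') ) · Σ_{m=−∞}^∞ e^{im(φ−φ')} Q_{m−1/2}^{−(ν+1)/2}((r² + r'²)/(2rr')), where r_< := min{r, r'} and r_> := max{r, r'}, and where Q_{m−1/2}^{−(ν+1)/2} = Q_{−m−1/2}^{−(ν+1)/2} for negative indices (the degree is symmetric about −1/2). -/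

import Mathlib

open Complex

/-- Pochhammer symbol (rising factorial) `(a)_k = a (a+1) ⋯ (a+k-1)`. -/
noncomputable def poch (a : ℂ) (k : ℕ) : ℂ := ∏ i ∈ Finset.range k, (a + (i : ℂ))

/-- Gauss hypergeometric function `₂F₁(a,b;c;w)` as a series. -/
noncomputable def hyp2F1 (a b c w : ℂ) : ℂ :=
  ∑' k : ℕ, poch a k * poch b k / (poch c k * (Nat.factorial k : ℂ)) * w ^ k

/-- Terminating generalized hypergeometric function `₃F₂(-m,a₂,a₃;b₁,b₂;1)`. -/
noncomputable def hyp3F2 (m : ℕ) (a2 a3 b1 b2 : ℂ) : ℂ :=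
  ∑ j ∈ Finset.range (m + 1),
    poch (-(m : ℂ)) j * poch a2 j * poch a3 j /
      (poch b1 j * poch b2 j * (Nat.factorial j : ℂ))

/-- Gegenbauer polynomial `C_n^μ(x)`. -/
noncomputable def gegenbauerC (n : ℕ) (μ : ℂ) (x : ℂ) : ℂ :=
  poch (2 * μ) n / (Nat.factorial n : ℂ) *
    ∑ j ∈ Finset.range (n + 1),
      poch (-(n : ℂ)) j * poch ((n : ℂ) + 2 * μ) j /
          (poch (μ + 1 / 2) j * (Nat.factorial j : ℂ)) * ((1 - x) / 2) ^ j

/-- Associated Legendre function of the second kind `Q_ν^μ(z)` (principal branches). -/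
noncomputable def legendreQ (ν μ z : ℂ) : ℂ :=
  (Real.sqrt Real.pi : ℂ) * Complex.exp (Real.pi * I * μ) * Complex.Gamma (ν + μ + 1) *
      (z ^ 2 - 1) ^ (μ / 2) /
      ((2 : ℂ) ^ (ν + 1) * Complex.Gamma (ν + 3 / 2) * z ^ (ν + μ + 1)) *
    hyp2F1 ((ν + μ + 2) / 2) ((ν + μ + 1) / 2) (ν + 3 / 2) (1 / z ^ 2)

/-- Legendre polynomial `P_n(x)`. -/
noncomputable def legendrePoly (n : ℕ) (x : ℂ) : ℂ :=
  ∑ j ∈ Finset.range (n + 1),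
    poch (-(n : ℂ)) j * poch ((n : ℂ) + 1) j / (poch 1 j * (Nat.factorial j : ℂ)) *
      ((1 - x) / 2) ^ j

/-- Chebyshev polynomial of the second kind `U_n(x)`. -/
noncomputable def chebyshevU (n : ℕ) (x : ℂ) : ℂ :=
  ((n : ℂ) + 1) *
    ∑ j ∈ Finset.range (n + 1),
      poch (-(n : ℂ)) j * poch ((n : ℂ) + 2) j / (poch (3 / 2) j * (Nat.factorial j : ℂ)) *
        ((1 - x) / 2) ^ j

/-!
Write `a = -ν / 2`, `ψ = φ - φ'` and `z = (r² + r'²) / (2rr') > 1`. The law of cosines gives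
`‖x - x'‖² = 2rr' (z - cos ψ)`, so the theorem is an expansion of `(z - cos ψ) ^ (-a)`. Put
`q = 1 / (2z)` and `w = e^{iψ}`: the binomial series of `(1 - q (w + w⁻¹)) ^ (-a)`, with the powers
of `w + w⁻¹` multiplied out, is an absolutely convergent double series in `w ^ i * w⁻¹ ^ j`. Its
terms with `i - j = m` add up to the hypergeometric series in the definition of
`Q_{|m|-1/2}^{a-1/2}(z)`, by the duplication and factorial identities for Pochhammer symbols.
-/

section Pochhammer

lemma poch_eq_eval_ascPochhammer (a : ℂ) (n : ℕ) : poch a n = (ascPochhammer ℂ n).eval a := by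
  induction n with
  | zero => simp [poch]
  | succ n ih => rw [ascPochhammer_succ_eval, ← ih, poch, poch, Finset.prod_range_succ]

lemma poch_succ (a : ℂ) (n : ℕ) : poch a (n + 1) = poch a n * (a + n) :=
  Finset.prod_range_succ _ _

lemma poch_div_factorial (a : ℂ) (n : ℕ) :
    poch a n / n.factorial = Ring.choose (a + n - 1) n := by
  rw [← Ring.multichoose_eq, div_eq_iff (mod_cast n.factorial_ne_zero),
    poch_eq_eval_ascPochhammer, ← Polynomial.ascPochhammer_smeval_eq_eval,
    ← Ring.factorial_nsmul_multichoose_eq_ascPochhammer, nsmul_eq_mul, mul_comm]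

lemma poch_add_two_mul (a : ℂ) (n k : ℕ) :
    poch a (n + 2 * k) = poch a n * (4 ^ k * poch ((a + n + 1) / 2) k * poch ((a + n) / 2) k) := by
  induction k with
  | zero => simp [poch]
  | succ k ih =>
    rw [mul_add_one, ← add_assoc, poch_succ, poch_succ, ih, poch_succ, poch_succ]
    push_cast
    ring

lemma factorial_mul_poch (n k : ℕ) :
    (n.factorial : ℂ) * poch (n + 1) k = (n + k).factorial := by
  rw [poch_eq_eval_ascPochhammer, factorial_mul_ascPochhammer]

lemma Gamma_add_natCast {a : ℂ} (ha : ∀ k : ℕ, a ≠ -k) (n : ℕ) :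
    Gamma (a + n) = poch a n * Gamma a := by
  rw [poch_eq_eval_ascPochhammer, ← Gamma_add_nat_div_Gamma_eq a ha,
    div_mul_cancel₀ _ (Gamma_ne_zero ha)]

end Pochhammer

section DoubleSeries

open Finset

lemma hasSum_prod_of_hasSum_antidiagonal {A E : Type*} [AddCommMonoid A] [HasAntidiagonal A]
    [NormedAddCommGroup E] [CompleteSpace E] {f : A × A → E} {s : E}
    (hf : Summable fun n ↦ ∑ p ∈ antidiagonal n, ‖f p‖)
    (hs : HasSum (fun n ↦ ∑ p ∈ antidiagonal n, f p) s) : HasSum f s := by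
  have summable_f : Summable f := by
    refine .of_norm ?_
    rw [← HasAntidiagonal.sigmaAntidiagonalEquivProd.summable_iff]
    refine (summable_sigma_of_nonneg fun _ ↦ norm_nonneg _).mpr
      ⟨fun n ↦ (hasSum_fintype _).summable, hf.congr fun n ↦ ?_⟩
    rw [tsum_fintype]
    exact (sum_coe_sort _ fun p ↦ ‖f p‖).symm
  have hasSum_sigma := (HasAntidiagonal.sigmaAntidiagonalEquivProd.hasSum_iff.mpr
    summable_f.hasSum).sigma fun n ↦ hasSum_fintype _
  have fiber_sums : HasSum (fun n ↦ ∑ p ∈ antidiagonal n, f p) (∑' p, f p) := by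
    refine hasSum_sigma.congr_fun fun n ↦ ?_
    exact (sum_coe_sort _ f).symm
  exact fiber_sums.unique hs ▸ summable_f.hasSum

lemma sum_antidiagonal_pow_div_factorial {K : Type*} [Field K] [CharZero K] (x y : K) (n : ℕ) :
    ∑ p ∈ antidiagonal n, x ^ p.1 / p.1.factorial * (y ^ p.2 / p.2.factorial) =
      (x + y) ^ n / n.factorial := by
  rw [(Commute.all x y).add_pow', sum_div]
  refine sum_congr rfl fun p hp ↦ ?_
  obtain rfl := mem_antidiagonal.mp hp
  have hp₁ : (p.1.factorial : K) ≠ 0 := mod_cast p.1.factorial_ne_zero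
  have hp₂ : (p.2.factorial : K) ≠ 0 := mod_cast p.2.factorial_ne_zero
  have hp₁₂ : ((p.1 + p.2).factorial : K) ≠ 0 := mod_cast (p.1 + p.2).factorial_ne_zero
  rw [nsmul_eq_mul, Nat.cast_add_choose]
  field_simp

lemma hasSum_prod_of_hasSum_add_pow {𝕜 : Type*} [RCLike 𝕜] {c : ℕ → 𝕜} {x y s : 𝕜}
    (hc : Summable fun n ↦ ‖c n‖ * ((‖x‖ + ‖y‖) ^ n / n.factorial))
    (hs : HasSum (fun n ↦ c n * ((x + y) ^ n / n.factorial)) s) :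
    HasSum (fun p : ℕ × ℕ ↦
      c (p.1 + p.2) * (x ^ p.1 / p.1.factorial * (y ^ p.2 / p.2.factorial))) s := by
  refine hasSum_prod_of_hasSum_antidiagonal (hc.congr fun n ↦ ?_) (hs.congr_fun fun n ↦ ?_)
  · rw [← sum_antidiagonal_pow_div_factorial, mul_sum]
    refine sum_congr rfl fun p hp ↦ ?_
    rw [mem_antidiagonal.mp hp]
    simp only [norm_mul, norm_div, norm_pow, RCLike.norm_natCast]
  · rw [← sum_antidiagonal_pow_div_factorial, mul_sum]
    refine sum_congr rfl fun p hp ↦ ?_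
    rw [mem_antidiagonal.mp hp]

/-- `ℤ × ℕ ≃ ℕ × ℕ`, where `(m, k)` is the `k`-th point of the diagonal `i - j = m` of `ℕ × ℕ`,
counted from the boundary of the quadrant. -/
def diagonalEquiv : ℤ × ℕ ≃ ℕ × ℕ where
  toFun p := (p.1.toNat + p.2, (-p.1).toNat + p.2)
  invFun p := ((p.1 : ℤ) - p.2, min p.1 p.2)
  left_inv p := by ext <;> dsimp only <;> lia
  right_inv p := by ext <;> dsimp only <;> lia

lemma diagonalEquiv_fst_add_snd (m : ℤ) (k : ℕ) :
    (diagonalEquiv (m, k)).1 + (diagonalEquiv (m, k)).2 = m.natAbs + 2 * k := by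
  simp only [diagonalEquiv, Equiv.coe_fn_mk]
  lia

lemma pow_div_factorial_diagonalEquiv {K : Type*} [Field K] (q : K) {w : K} (hw : w ≠ 0)
    (m : ℤ) (k : ℕ) :
    (q * w) ^ (diagonalEquiv (m, k)).1 / (diagonalEquiv (m, k)).1.factorial *
      ((q * w⁻¹) ^ (diagonalEquiv (m, k)).2 / (diagonalEquiv (m, k)).2.factorial) =
    w ^ m * (q ^ (m.natAbs + 2 * k) / ((m.natAbs + k).factorial * k.factorial)) := by
  simp only [diagonalEquiv, Equiv.coe_fn_mk]
  obtain ⟨n, rfl | rfl⟩ := m.eq_nat_or_neg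
  all_goals
    simp only [Int.toNat_natCast, Int.toNat_neg_natCast, Int.natAbs_natCast, Int.natAbs_neg,
      neg_neg, zero_add, zpow_neg, zpow_natCast, mul_pow, inv_pow, two_mul]
    field_simp
    ring_nf

end DoubleSeries

section BinomialSeries

variable {x y q w : ℂ}

lemma hasSum_one_sub_cpow_neg (a : ℂ) (hx : ‖x‖ < 1) :
    HasSum (fun n : ℕ ↦ poch a n * (x ^ n / n.factorial)) ((1 - x) ^ (-a)) := by
  have h := (one_div_one_sub_cpow_hasFPowerSeriesOnBall_zero a).hasSum (y := x)
    (by simpa [enorm_eq_nnnorm] using! hx)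
  simpa [cpow_neg, FormalMultilinearSeries.ofScalars, ← poch_div_factorial, mul_div_assoc',
    div_mul_eq_mul_div] using h

lemma hasSum_one_sub_add_cpow_neg (a : ℂ) (hxy : ‖x‖ + ‖y‖ < 1) :
    HasSum (fun p : ℕ × ℕ ↦
      poch a (p.1 + p.2) * (x ^ p.1 / p.1.factorial * (y ^ p.2 / p.2.factorial)))
      ((1 - (x + y)) ^ (-a)) := by
  refine hasSum_prod_of_hasSum_add_pow ?_
    (hasSum_one_sub_cpow_neg a ((norm_add_le x y).trans_lt hxy))
  have hnorm : ‖((‖x‖ + ‖y‖ : ℝ) : ℂ)‖ = ‖x‖ + ‖y‖ := by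
    rw [norm_real, Real.norm_of_nonneg (by positivity)]
  refine (hasSum_one_sub_cpow_neg a (hnorm.trans_lt hxy)).summable.norm.congr fun n ↦ ?_
  rw [norm_mul, norm_div, norm_pow, hnorm, norm_natCast]

/-- The coefficient of `w ^ n`, and of `w ^ (-n)`, in the Laurent expansion of
`(1 - q * (w + w⁻¹)) ^ (-a)` in powers of `w`. -/
noncomputable def laurentCoeff (a q : ℂ) (n : ℕ) : ℂ :=
  poch a n / n.factorial * q ^ n *
    hyp2F1 ((a + n + 1) / 2) ((a + n) / 2) (n + 1) ((2 * q) ^ 2)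

lemma tsum_poch_add_two_mul (a q : ℂ) (n : ℕ) :
    ∑' k : ℕ, poch a (n + 2 * k) * (q ^ (n + 2 * k) / ((n + k).factorial * k.factorial)) =
      laurentCoeff a q n := by
  rw [laurentCoeff, hyp2F1, ← tsum_mul_left]
  refine tsum_congr fun k ↦ ?_
  rw [poch_add_two_mul, ← factorial_mul_poch, pow_add, pow_mul, mul_pow 2 q, mul_pow,
    show (2 : ℂ) ^ 2 = 4 by norm_num]
  ring

lemma hasSum_laurentCoeff (a : ℂ) (hw : w ≠ 0) (hqw : ‖q * w‖ + ‖q * w⁻¹‖ < 1) :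
    HasSum (fun m : ℤ ↦ w ^ m * laurentCoeff a q m.natAbs) ((1 - q * (w + w⁻¹)) ^ (-a)) := by
  have h := diagonalEquiv.hasSum_iff.mpr (hasSum_one_sub_add_cpow_neg a hqw)
  rw [← mul_add] at h
  refine (h.prod_fiberwise fun m ↦ (h.summable.prod_factor m).hasSum).congr_fun fun m ↦ ?_
  rw [← tsum_poch_add_two_mul, ← tsum_mul_left]
  refine tsum_congr fun k ↦ ?_
  rw [Function.comp_apply, pow_div_factorial_diagonalEquiv q hw, diagonalEquiv_fst_add_snd,
    mul_left_comm]

end BinomialSeries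

section Heine

variable {a z : ℂ}

lemma legendreQ_natCast_sub_half (ha : ∀ k : ℕ, a ≠ -k) (hz : z ≠ 0) (n : ℕ) :
    legendreQ (n - 1 / 2) (a - 1 / 2) z =
      √(Real.pi / 2) * exp (Real.pi * I * (a - 1 / 2)) * Gamma a *
        (z ^ 2 - 1) ^ ((a - 1 / 2) / 2) * z ^ (-a) * laurentCoeff a (1 / (2 * z)) n := by
  have two_cpow_half : (2 : ℂ) ^ (1 / 2 : ℂ) = √2 := by
    rw [Real.sqrt_eq_rpow, ofReal_cpow zero_le_two]
    norm_num
  have sqrt_two_ne_zero : (√2 : ℂ) ≠ 0 := mod_cast Real.sqrt_ne_zero'.mpr zero_lt_two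
  have cpow_ne_zero : z ^ a ≠ 0 := by simp [cpow_eq_zero_iff, hz]
  rw [legendreQ, laurentCoeff,
    show (n - 1 / 2 + (a - 1 / 2) + 2) / 2 = (a + n + 1) / 2 by ring,
    show n - 1 / 2 + (a - 1 / 2) + 1 = a + n by ring,
    show (n : ℂ) - 1 / 2 + 3 / 2 = n + 1 by ring,
    show (n : ℂ) - 1 / 2 + 1 = n + 1 / 2 by ring,
    show (2 * (1 / (2 * z))) ^ 2 = 1 / z ^ 2 by field_simp,
    Gamma_add_natCast ha, Gamma_nat_eq_factorial, cpow_add _ _ hz, cpow_add _ _ two_ne_zero,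
    cpow_natCast, cpow_natCast, two_cpow_half, cpow_neg, Real.sqrt_div Real.pi_nonneg,
    one_div_pow, mul_pow]
  push_cast
  field_simp

lemma sub_ofReal_cpow {c : ℝ} (hz : z ∈ slitPlane) (hzc : z - c ∈ slitPlane) (s : ℂ) :
    (z - c) ^ s = z ^ s * (1 - c / z) ^ s := by
  have hz₀ := slitPlane_ne_zero hz
  have arg_z_ne_pi := (mem_slitPlane_iff_arg.mp hz).1
  have him : (z - c).im = z.im := by simp
  -- `z` and `z - c` lie in the same half-plane, so the difference of their arguments is below `π`.
  have arg_mem : arg (z - c) + arg z⁻¹ ∈ Set.Ioc (-Real.pi) Real.pi := by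
    rw [arg_inv, if_neg arg_z_ne_pi]
    rcases le_or_gt 0 z.im with h | h
    · have arg_z_lt_pi := arg_z_ne_pi.lt_of_le (arg_le_pi z)
      constructor <;> linarith [arg_le_pi (z - c), arg_nonneg_iff.mpr h,
        arg_nonneg_iff.mpr (him ▸ h : 0 ≤ (z - c).im)]
    · constructor <;> linarith [neg_pi_lt_arg z, neg_pi_lt_arg (z - c), arg_neg_iff.mpr h,
        arg_neg_iff.mpr (him ▸ h : (z - c).im < 0)]
  have log_one_sub : log (1 - c / z) = log (z - c) - log z := by
    rw [show 1 - c / z = (z - c) * z⁻¹ by field_simp,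
      (log_mul_eq_add_log_iff (slitPlane_ne_zero hzc) (inv_ne_zero hz₀)).mpr arg_mem,
      log_inv _ arg_z_ne_pi, ← sub_eq_add_neg]
  have one_sub_ne_zero : 1 - c / z ≠ 0 := by
    rw [one_sub_div hz₀]
    exact div_ne_zero (slitPlane_ne_zero hzc) hz₀
  rw [cpow_def_of_ne_zero (slitPlane_ne_zero hzc), cpow_def_of_ne_zero hz₀,
    cpow_def_of_ne_zero one_sub_ne_zero, log_one_sub, ← exp_add]
  ring_nf

lemma sub_ofReal_mem_slitPlane {c : ℝ} (hz : z ∈ slitPlane) (hc : c < ‖z‖) :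
    z - c ∈ slitPlane := by
  rw [mem_slitPlane_iff, sub_re, sub_im, ofReal_re, ofReal_im, sub_zero, or_iff_not_imp_right,
    not_not]
  intro him
  have hre : 0 < z.re := (mem_slitPlane_iff.mp hz).resolve_right (not_not.mpr him)
  rw [← abs_re_eq_norm.mpr him, abs_of_pos hre] at hc
  exact sub_pos.mpr hc

/-- Heine's identity, in the generalized form of Cohl and Dominici. -/
lemma hasSum_exp_mul_legendreQ (ha : ∀ k : ℕ, a ≠ -k) (hz : z ∈ slitPlane) (hz₁ : 1 < ‖z‖)
    (ψ : ℝ) :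
    HasSum (fun m : ℤ ↦ exp (I * m * ψ) * legendreQ (m.natAbs - 1 / 2) (a - 1 / 2) z)
      (√(Real.pi / 2) * exp (Real.pi * I * (a - 1 / 2)) * Gamma a *
        (z ^ 2 - 1) ^ ((a - 1 / 2) / 2) * (z - Real.cos ψ) ^ (-a)) := by
  have hz₀ := slitPlane_ne_zero hz
  have hcos : Real.cos ψ < ‖z‖ := (Real.cos_le_one ψ).trans_lt hz₁
  have hq : ‖1 / (2 * z) * exp (ψ * I)‖ + ‖1 / (2 * z) * (exp (ψ * I))⁻¹‖ < 1 := by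
    simp only [norm_mul, norm_inv, norm_exp_ofReal_mul_I, norm_div, norm_one, norm_ofNat]
    field_simp
    linarith
  have hsum : 1 - 1 / (2 * z) * (exp (ψ * I) + (exp (ψ * I))⁻¹) = 1 - Real.cos ψ / z := by
    rw [← exp_neg, ← neg_mul, ofReal_cos, cos]
    field_simp
  have h := hasSum_laurentCoeff a (exp_ne_zero _) hq
  rw [hsum] at h
  rw [sub_ofReal_cpow hz (sub_ofReal_mem_slitPlane hz hcos), ← mul_assoc]
  refine (h.mul_left _).congr_fun fun m ↦ ?_
  rw [legendreQ_natCast_sub_half ha hz₀, ← exp_int_mul,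
    show I * m * ψ = m * (ψ * I) by ring, mul_left_comm]

end Heine

section Polar

variable {r r' : ℝ}

lemma norm_sub_sq_of_polar {φ φ' : ℝ} {x x' : EuclideanSpace ℝ (Fin 2)}
    (hx0 : x 0 = r * Real.cos φ) (hx1 : x 1 = r * Real.sin φ)
    (hx'0 : x' 0 = r' * Real.cos φ') (hx'1 : x' 1 = r' * Real.sin φ') :
    ‖x - x'‖ ^ 2 = r ^ 2 + r' ^ 2 - 2 * r * r' * Real.cos (φ - φ') := by
  rw [EuclideanSpace.norm_sq_eq, Fin.sum_univ_two, Real.cos_sub]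
  simp only [PiLp.sub_apply, hx0, hx1, hx'0, hx'1, Real.norm_eq_abs, sq_abs]
  linear_combination r ^ 2 * Real.sin_sq_add_cos_sq φ + r' ^ 2 * Real.sin_sq_add_cos_sq φ'

lemma one_lt_add_sq_div (hr : 0 < r) (hr' : 0 < r') (hne : r ≠ r') :
    1 < (r ^ 2 + r' ^ 2) / (2 * r * r') := by
  rw [one_lt_div (by positivity)]
  linarith [sub_sq r r', sq_pos_of_ne_zero (sub_ne_zero.mpr hne)]

lemma max_sq_sub_min_sq (hr : 0 ≤ r) (hr' : 0 ≤ r') :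
    max r r' ^ 2 - min r r' ^ 2 = |r ^ 2 - r' ^ 2| := by
  rcases le_total r r' with h | h
  · rw [max_eq_right h, min_eq_left h, abs_sub_comm, abs_of_nonneg]
    exact sub_nonneg.mpr (pow_le_pow_left₀ hr h 2)
  · rw [max_eq_left h, min_eq_right h, abs_of_nonneg]
    exact sub_nonneg.mpr (pow_le_pow_left₀ hr' h 2)

lemma add_sq_div_sq_sub_one (hr : r ≠ 0) (hr' : r' ≠ 0) :
    ((r ^ 2 + r' ^ 2) / (2 * r * r')) ^ 2 - 1 = (|r ^ 2 - r' ^ 2| / (2 * r * r')) ^ 2 := by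
  rw [div_pow |_|, sq_abs]
  field_simp
  ring

lemma ofReal_sq_cpow_half {t : ℝ} (ht : 0 ≤ t) (s : ℂ) : ((t ^ 2 : ℝ) : ℂ) ^ (s / 2) = t ^ s := by
  rw [ofReal_pow, ← cpow_ofNat_mul', mul_div_cancel₀ _ two_ne_zero] <;>
    simp [arg_ofReal_of_nonneg ht, Real.pi_pos, Real.pi_nonneg]

lemma norm_sub_cpow_of_polar (ν : ℂ) (hr : 0 < r) (hr' : 0 < r') {φ φ' : ℝ}
    {x x' : EuclideanSpace ℝ (Fin 2)}
    (hx0 : x 0 = r * Real.cos φ) (hx1 : x 1 = r * Real.sin φ)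
    (hx'0 : x' 0 = r' * Real.cos φ') (hx'1 : x' 1 = r' * Real.sin φ') :
    (‖x - x'‖ : ℂ) ^ ν = ((2 * r * r' : ℝ) : ℂ) ^ (ν / 2) *
      (((r ^ 2 + r' ^ 2) / (2 * r * r') : ℝ) - Real.cos (φ - φ')) ^ (ν / 2) := by
  have norm_sq : ‖x - x'‖ ^ 2 =
      2 * r * r' * ((r ^ 2 + r' ^ 2) / (2 * r * r') - Real.cos (φ - φ')) := by
    rw [norm_sub_sq_of_polar hx0 hx1 hx'0 hx'1]
    field_simp
  have sub_cos_nonneg : 0 ≤ (r ^ 2 + r' ^ 2) / (2 * r * r') - Real.cos (φ - φ') :=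
    nonneg_of_mul_nonneg_right (norm_sq ▸ sq_nonneg _) (by positivity)
  rw [← ofReal_sq_cpow_half (norm_nonneg _), norm_sq, ofReal_mul,
    mul_cpow_ofReal_nonneg (by positivity) sub_cos_nonneg, ofReal_sub]

lemma prefactor_mul_heine_factor {ν : ℂ} {d : ℝ} (hν : Gamma (-ν / 2) ≠ 0) (hd : 0 < d)
    (hr : 0 < r) (hr' : 0 < r') :
    exp (Real.pi * I * (ν + 1) / 2) / Gamma (-ν / 2) *
        ((d : ℂ) ^ ((ν + 1) / 2) / √(Real.pi * r * r')) *
      (√(Real.pi / 2) * exp (Real.pi * I * (-ν / 2 - 1 / 2)) * Gamma (-ν / 2) *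
        ((d / (2 * r * r') : ℝ) : ℂ) ^ (-ν / 2 - 1 / 2)) =
      ((2 * r * r' : ℝ) : ℂ) ^ (ν / 2) := by
  set R := 2 * r * r' with hR
  have hR₀ : 0 < R := by positivity
  have hdR : 0 < d / R := by positivity
  have sqrt_eq : √(Real.pi * r * r') = √(Real.pi / 2) * √R := by
    rw [← Real.sqrt_mul (by positivity), hR]
    ring_nf
  have d_cpow : (d : ℂ) ^ ((ν + 1) / 2) =
      ((d / R : ℝ) : ℂ) ^ ((ν + 1) / 2) * ((R : ℂ) ^ (ν / 2) * √R) := by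
    have sqrt_eq_cpow : (√R : ℂ) = (R : ℂ) ^ (1 / 2 : ℂ) := by
      rw [Real.sqrt_eq_rpow, ofReal_cpow hR₀.le]
      norm_num
    rw [sqrt_eq_cpow, ← cpow_add _ _ (mod_cast hR₀.ne'), ← add_div,
      ← mul_cpow_ofReal_nonneg hdR.le hR₀.le, ← ofReal_mul, div_mul_cancel₀ _ hR₀.ne']
  have dR_cpow_ne_zero : ((d / R : ℝ) : ℂ) ^ ((ν + 1) / 2) ≠ 0 := by
    simp [cpow_eq_zero_iff, hd.ne', hR₀.ne']
  have sqrt_R_ne_zero : (√R : ℂ) ≠ 0 := mod_cast Real.sqrt_ne_zero'.mpr hR₀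
  have sqrt_pi_ne_zero : (√(Real.pi / 2) : ℂ) ≠ 0 :=
    mod_cast Real.sqrt_ne_zero'.mpr Real.pi_div_two_pos
  rw [d_cpow, sqrt_eq, show -ν / 2 - 1 / 2 = -((ν + 1) / 2) by ring, mul_neg, mul_div_assoc,
    exp_neg, cpow_neg, ofReal_mul √_]
  rw [neg_div] at hν ⊢
  field_simp

lemma hasSum_exp_mul_legendreQ_of_radii {a : ℂ} (ha : ∀ k : ℕ, a ≠ -k) (hr : 0 < r) (hr' : 0 < r')
    (hne : r ≠ r') (ψ : ℝ) :
    HasSum (fun m : ℤ ↦ exp (I * m * ψ) *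
        legendreQ (m.natAbs - 1 / 2) (a - 1 / 2) ((r ^ 2 + r' ^ 2) / (2 * r * r') : ℝ))
      (√(Real.pi / 2) * exp (Real.pi * I * (a - 1 / 2)) * Gamma a *
        ((|r ^ 2 - r' ^ 2| / (2 * r * r') : ℝ) : ℂ) ^ (a - 1 / 2) *
        (((r ^ 2 + r' ^ 2) / (2 * r * r') : ℝ) - Real.cos ψ) ^ (-a)) := by
  have hz := one_lt_add_sq_div hr hr' hne
  have hsq := add_sq_div_sq_sub_one hr.ne' hr'.ne'
  set z := (r ^ 2 + r' ^ 2) / (2 * r * r')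
  have hz₀ : 0 < z := zero_lt_one.trans hz
  have h := hasSum_exp_mul_legendreQ ha (z := z) (ofReal_mem_slitPlane.mpr hz₀)
    (by rwa [norm_real, Real.norm_of_nonneg hz₀.le]) ψ
  rwa [← ofReal_pow, ← ofReal_one, ← ofReal_sub, hsq, ofReal_one,
    ofReal_sq_cpow_half (by positivity)] at h

end Polar

/-- the azimuthal Fourier expansion of `‖x - x'‖^ν` on `ℝ²`, where for
negative `m` the degree `m - 1/2` is interpreted via the symmetry
`Q_{m-1/2} = Q_{-m-1/2}` (i.e. using `|m| - 1/2`). -/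
theorem power_law_fourier_expansion_R2
    (ν : ℂ) (hν : ∀ m : ℕ, ν ≠ 2 * (m : ℂ))
    (r r' φ φ' : ℝ) (hr : 0 < r) (hr' : 0 < r') (hne : r ≠ r')
    (x x' : EuclideanSpace ℝ (Fin 2))
    (hx0 : x 0 = r * Real.cos φ) (hx1 : x 1 = r * Real.sin φ)
    (hx'0 : x' 0 = r' * Real.cos φ') (hx'1 : x' 1 = r' * Real.sin φ') :
    (‖x - x'‖ : ℂ) ^ ν =
      Complex.exp (Real.pi * I * (ν + 1) / 2) / Complex.Gamma (-ν / 2) *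
        ((((max r r') ^ 2 - (min r r') ^ 2 : ℝ) : ℂ) ^ ((ν + 1) / 2) /
          (Real.sqrt (Real.pi * r * r') : ℂ)) *
        ∑' m : ℤ,
          Complex.exp (I * (m : ℂ) * ((φ : ℂ) - (φ' : ℂ))) *
            legendreQ ((m.natAbs : ℂ) - 1 / 2) (-(ν + 1) / 2)
              (((r ^ 2 + r' ^ 2) / (2 * r * r') : ℝ) : ℂ) := by
  have neg_half_ne (k : ℕ) : -ν / 2 ≠ -k := fun h ↦ hν k (by linear_combination -2 * h)
  have abs_sq_sub_pos : 0 < |r ^ 2 - r' ^ 2| :=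
    abs_pos.mpr (sub_ne_zero.mpr ((pow_left_inj₀ hr.le hr'.le two_ne_zero).not.mpr hne))
  have heine := hasSum_exp_mul_legendreQ_of_radii neg_half_ne hr hr' hne (φ - φ')
  rw [show -ν / 2 - 1 / 2 = -(ν + 1) / 2 by ring, ofReal_sub] at heine
  rw [norm_sub_cpow_of_polar ν hr hr' hx0 hx1 hx'0 hx'1, max_sq_sub_min_sq hr.le hr'.le,
    heine.tsum_eq, ← mul_assoc,
    ← prefactor_mul_heine_factor (Gamma_ne_zero neg_half_ne) abs_sq_sub_pos hr hr']
  congr 2 <;> ring_nf
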